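/- Assume rank M = 2, and that s = (s₁,s₂,s₃)ᵀ and t = (t₁,t₂,t₃)ᵀ are nonzero vectors spanning the null spaces of M and of Mᵀ respectively; set z = t₁x₁+t₂x₂+t₃x₃ ∈ A¹. If s₁t₁² + s₂t₂² + s₃t₃² ≠ 0, then ∂(z) = 0 and for every n ≥ 1 the power zⁿ is not a coboundary, i.e. zⁿ ∉ Bⁿ (so k[⌈z⌉] is a polynomial subalgebra of the cohomology of (A,∂)). -/

import Mathlib

/-!
Evaluate the central squares `xᵢ²` at the null vector `s` of `M`: this is an algebra map
`π : A → Cl(Q)` onto the Clifford algebra of `Q(v) = ∑ sᵢ vᵢ²`, sending `xᵢ` to the `i`-th basis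
vector. Since `π(∂ xᵢ) = ∑ⱼ mᵢⱼ sⱼ = 0`, the Leibniz rule gives `π ∘ ∂ = 0` on every `Aⁿ`
(`cliffMap_d`), so `π` kills all coboundaries. On the other hand `π(z)² = Q(t) = ∑ sᵢ tᵢ²` is a
nonzero scalar, so `π(zⁿ) = π(z)ⁿ ≠ 0` (`ι_pow_ne_zero`).
-/

noncomputable section

/-- The skew-commutation relations `xᵢxⱼ + xⱼxᵢ = 0` (`i ≠ j`) among the three generators. -/
inductive SkewRel (k : Type) [Field k] :
    FreeAlgebra k (Fin 3) → FreeAlgebra k (Fin 3) → Prop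
  | r01 : SkewRel k
      (FreeAlgebra.ι k 0 * FreeAlgebra.ι k 1 + FreeAlgebra.ι k 1 * FreeAlgebra.ι k 0) 0
  | r12 : SkewRel k
      (FreeAlgebra.ι k 1 * FreeAlgebra.ι k 2 + FreeAlgebra.ι k 2 * FreeAlgebra.ι k 1) 0
  | r20 : SkewRel k
      (FreeAlgebra.ι k 2 * FreeAlgebra.ι k 0 + FreeAlgebra.ι k 0 * FreeAlgebra.ι k 2) 0

/-- The graded skew polynomial algebra `A = k⟨x₁,x₂,x₃⟩/(x₁x₂+x₂x₁, x₂x₃+x₃x₂, x₃x₁+x₁x₃)`. -/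
abbrev SkewAlg (k : Type) [Field k] := RingQuot (SkewRel k)

/-- The generators `x₁, x₂, x₃` of `A` (indexed by `0, 1, 2`). -/
def X (k : Type) [Field k] (i : Fin 3) : SkewAlg k :=
  RingQuot.mkAlgHom k (SkewRel k) (FreeAlgebra.ι k i)

/-- The degree-`n` homogeneous component `Aⁿ` of `A`: the `n`-th power of the span of the
generators (the algebra `A` is generated in degree `1` by `x₁,x₂,x₃`, and the defining
relations are homogeneous). -/
def deg (k : Type) [Field k] (n : ℕ) : Submodule k (SkewAlg k) :=
  (Submodule.span k {X k 0, X k 1, X k 2}) ^ n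

/-- A differential on `A` determined by a matrix `M ∈ M₃(k)`: a `k`-linear map of degree `1`
squaring to zero, satisfying the graded Leibniz rule, with
`∂(xᵢ) = mᵢ₁x₁² + mᵢ₂x₂² + mᵢ₃x₃²`. -/
structure DGDiff (k : Type) [Field k] (M : Matrix (Fin 3) (Fin 3) k) where
  d : SkewAlg k →ₗ[k] SkewAlg k
  grade : ∀ n : ℕ, ∀ a ∈ deg k n, d a ∈ deg k (n + 1)
  dd : ∀ a : SkewAlg k, d (d a) = 0
  leibniz : ∀ n : ℕ, ∀ a ∈ deg k n, ∀ b : SkewAlg k,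
    d (a * b) = d a * b + ((-1 : k) ^ n) • (a * d b)
  dX : ∀ i : Fin 3,
    d (X k i) = M i 0 • (X k 0) ^ 2 + M i 1 • (X k 1) ^ 2 + M i 2 • (X k 2) ^ 2

/-- `Zⁿ`, the space of cocycles of degree `n`. -/
def cocycle (k : Type) [Field k] {M : Matrix (Fin 3) (Fin 3) k} (D : DGDiff k M) (n : ℕ) :
    Submodule k (SkewAlg k) :=
  LinearMap.ker D.d ⊓ deg k n

/-- `Bⁿ`, the space of coboundaries of degree `n` (`B⁰ = 0`, `Bⁿ⁺¹ = ∂(Aⁿ)`). -/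
def cobound (k : Type) [Field k] {M : Matrix (Fin 3) (Fin 3) k} (D : DGDiff k M) :
    ℕ → Submodule k (SkewAlg k)
  | 0 => ⊥
  | n + 1 => (deg k n).map D.d

/-- The quadratic form `v ↦ ∑ sᵢ vᵢ²` on `k³`. -/
def diagForm {k : Type} [Field k] (s : Fin 3 → k) : QuadraticForm k (Fin 3 → k) :=
  QuadraticMap.weightedSumSquares k s

lemma diagForm_apply {k : Type} [Field k] (s v : Fin 3 → k) :
    diagForm s v = s 0 * v 0 ^ 2 + s 1 * v 1 ^ 2 + s 2 * v 2 ^ 2 := by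
  simp [diagForm, QuadraticMap.weightedSumSquares_apply, Fin.sum_univ_three, pow_two]

/-- The image in the Clifford algebra of `diagForm s` of the `i`-th standard basis vector. -/
def cliffGen {k : Type} [Field k] (s : Fin 3 → k) (i : Fin 3) : CliffordAlgebra (diagForm s) :=
  CliffordAlgebra.ι (diagForm s) (Pi.single i 1)

lemma cliffGen_sq {k : Type} [Field k] (s : Fin 3 → k) (i : Fin 3) :
    cliffGen s i ^ 2 = algebraMap k _ (s i) := by
  rw [pow_two, cliffGen, CliffordAlgebra.ι_sq_scalar, diagForm_apply]
  fin_cases i <;> simp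

lemma cliffGen_anticomm {k : Type} [Field k] (s : Fin 3 → k) {i j : Fin 3} (h : i ≠ j) :
    cliffGen s i * cliffGen s j + cliffGen s j * cliffGen s i = 0 := by
  apply CliffordAlgebra.ι_mul_ι_add_swap_of_isOrtho
  simp only [QuadraticMap.IsOrtho, diagForm_apply]
  fin_cases i <;> fin_cases j <;> simp [add_comm] at h ⊢

/-- The algebra map `A → Cl(diagForm s)` sending each generator `xᵢ` to the `i`-th basis vector;
it specialises the central elements `xᵢ²` to the scalars `sᵢ`. -/
def cliffMap {k : Type} [Field k] (s : Fin 3 → k) :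
    SkewAlg k →ₐ[k] CliffordAlgebra (diagForm s) :=
  RingQuot.liftAlgHom k ⟨FreeAlgebra.lift k (cliffGen s), by
    intro x y h
    induction h <;> simp [cliffGen_anticomm]⟩

lemma cliffMap_X {k : Type} [Field k] (s : Fin 3 → k) (i : Fin 3) :
    cliffMap s (X k i) = cliffGen s i := by
  rw [cliffMap, X, RingQuot.liftAlgHom_mkAlgHom_apply, FreeAlgebra.lift_ι_apply]

/-- If `M s = 0`, specialisation at `s` annihilates the image of the differential: it kills every
`∂ xᵢ`, and the Leibniz rule propagates this to products. -/
lemma cliffMap_d {k : Type} [Field k] {M : Matrix (Fin 3) (Fin 3) k} (D : DGDiff k M)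
    {s : Fin 3 → k} (hs : M.mulVec s = 0) (n : ℕ) (a : SkewAlg k) (ha : a ∈ deg k n) :
    cliffMap s (D.d a) = 0 := by
  have hX : ∀ i, cliffMap s (D.d (X k i)) = 0 := by
    intro i
    have h := congrFun hs i
    simp only [Matrix.mulVec, dotProduct, Fin.sum_univ_three, Pi.zero_apply] at h
    rw [D.dX]
    simp only [map_add, map_smul, map_pow, cliffMap_X, cliffGen_sq]
    simp only [Algebra.smul_def]
    simp only [← map_mul, ← map_add, h, map_zero]
  have hspan : ∀ m ∈ Submodule.span k {X k 0, X k 1, X k 2}, cliffMap s (D.d m) = 0 := by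
    intro m hm
    induction hm using Submodule.span_induction with
    | mem x hx =>
      simp only [Set.mem_insert_iff, Set.mem_singleton_iff] at hx
      rcases hx with rfl | rfl | rfl <;> exact hX _
    | zero => simp
    | add x y _ _ hx hy => simp [hx, hy]
    | smul c x _ hx => simp [hx]
  -- The Leibniz rule for `1 * 1` reads `∂ 1 = ∂ 1 + ∂ 1`.
  have hone : D.d 1 = 0 := by
    have h := D.leibniz 0 1 (by rw [deg, pow_zero]; exact Submodule.one_le.mp le_rfl) 1
    simpa using h
  induction ha using Submodule.pow_induction_on_left' with
  | algebraMap r => rw [Algebra.algebraMap_eq_smul_one, map_smul, hone, smul_zero, map_zero]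
  | add x y i _ _ hx hy => rw [map_add, map_add, hx, hy, add_zero]
  | mem_mul m hm i x _ hx =>
    rw [D.leibniz 1 m (by rwa [deg, pow_one]) x]
    simp [hspan m hm, hx]

/-- An anisotropic vector squares in the Clifford algebra to the nonzero scalar `Q v`, so it is
not nilpotent. Invertibility of `2` gives Mathlib's proof that the Clifford algebra is nontrivial. -/
lemma ι_pow_ne_zero {k : Type} [Field k] [CharZero k] {V : Type} [AddCommGroup V] [Module k V]
    (Q : QuadraticForm k V) {v : V} (hv : Q v ≠ 0) (n : ℕ) :
    CliffordAlgebra.ι Q v ^ n ≠ 0 := by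
  have : Invertible (2 : k) := invertibleOfNonzero two_ne_zero
  intro h
  have h2 : algebraMap k (CliffordAlgebra Q) (Q v ^ n) = 0 := by
    rw [map_pow, ← CliffordAlgebra.ι_sq_scalar, ← pow_two, ← pow_mul, mul_comm, pow_mul, h,
      zero_pow two_ne_zero]
  exact pow_ne_zero n hv ((map_eq_zero_iff _ (algebraMap k (CliffordAlgebra Q)).injective).mp h2)

/-- Assume `rank M = 2`, let `s` and `t` be nonzero vectors spanning the
null spaces of `M` and `Mᵀ` respectively, and set `z = t₁x₁ + t₂x₂ + t₃x₃`.  If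
`s₁t₁² + s₂t₂² + s₃t₃² ≠ 0`, then `∂(z) = 0` and `zⁿ ∉ Bⁿ` for every `n ≥ 1` (so that
`k[⌈z⌉]` is a polynomial subalgebra of the cohomology of `(A, ∂)`). -/
theorem stmt8 (k : Type) [Field k] [IsAlgClosed k] [CharZero k]
    (M : Matrix (Fin 3) (Fin 3) k) (D : DGDiff k M) (hrank : M.rank = 2)
    (s t : Fin 3 → k) (hs0 : s ≠ 0) (ht0 : t ≠ 0)
    (hs : M.mulVec s = 0) (ht : M.transpose.mulVec t = 0)
    (hst : s 0 * (t 0) ^ 2 + s 1 * (t 1) ^ 2 + s 2 * (t 2) ^ 2 ≠ 0)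
    (z : SkewAlg k) (hz : z = t 0 • X k 0 + t 1 • X k 1 + t 2 • X k 2) :
    D.d z = 0 ∧ ∀ n : ℕ, 1 ≤ n → z ^ n ∉ cobound k D n := by
  subst hz
  refine ⟨?_, ?_⟩
  · have h : ∀ j, t 0 * M 0 j + t 1 * M 1 j + t 2 * M 2 j = 0 := by
      intro j
      have h := congrFun ht j
      simp only [Matrix.mulVec, dotProduct, Fin.sum_univ_three, Pi.zero_apply,
        Matrix.transpose_apply] at h
      linear_combination h
    simp only [map_add, map_smul, D.dX]
    have h' : ∀ a b c : SkewAlg k,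
        t 0 • (M 0 0 • a + M 0 1 • b + M 0 2 • c) + t 1 • (M 1 0 • a + M 1 1 • b + M 1 2 • c)
          + t 2 • (M 2 0 • a + M 2 1 • b + M 2 2 • c) = 0 := by
      intro a b c
      linear_combination (norm := module) h 0 • a + h 1 • b + h 2 • c
    exact h' _ _ _
  · intro n hn hmem
    obtain ⟨n, rfl⟩ : ∃ m, n = m + 1 := ⟨n - 1, by omega⟩
    obtain ⟨a, ha, hda⟩ := Submodule.mem_map.mp hmem
    have hz : cliffMap s (t 0 • X k 0 + t 1 • X k 1 + t 2 • X k 2)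
        = CliffordAlgebra.ι (diagForm s) t := by
      simp only [map_add, map_smul, cliffMap_X, cliffGen]
      simp only [← map_smul, ← map_add]
      congr 1
      ext i
      fin_cases i <;> simp
    refine ι_pow_ne_zero (diagForm s) (v := t) (by rwa [diagForm_apply]) (n + 1) ?_
    rw [← hz, ← map_pow, ← hda, cliffMap_d D hs n a ha]
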